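/- Let P_1, P_2, P_3 be three non-zero monomial prime ideals of S = K[x_1,...,x_n], none contained in another, with P_1 + P_2 + P_3 = (x_1,...,x_n), and I = P_1 ∩ P_2 ∩ P_3. If P_i ⊄ P_j + P_k for any permutation {i,j,k} of {1,2,3}, then depth_S(I) = 3. -/

import Mathlib

open MvPolynomial

/-- The depth of a module `M` with respect to an ideal `I`: the supremum of
lengths of `M`-regular sequences with entries in `I`. -/
noncomputable def moduleDepth (R : Type*) [CommRing R] (I : Ideal R)
    (M : Type*) [AddCommGroup M] [Module R M] : ℕ :=
  sSup {k | ∃ rs : List R, rs.length = k ∧ (∀ r ∈ rs, r ∈ I) ∧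
    RingTheory.Sequence.IsRegular M rs}

/-- The Stanley space `u·K[Z]`: the `K`-span of all monomials `u·v` with
`v` a monomial in the variables of `Z`. -/
noncomputable def stanleySpace {n : ℕ} (K : Type*) [Field K] (d : Fin n →₀ ℕ)
    (Z : Finset (Fin n)) : Submodule K (MvPolynomial (Fin n) K) :=
  Submodule.span K {f | ∃ e : Fin n →₀ ℕ, (∀ i, e i ≠ 0 → i ∈ Z) ∧
    f = monomial (d + e) (1 : K)}

/-- A Stanley decomposition of a monomial ideal `I`: a finite family of Stanley
spaces `uᵢ·K[Zᵢ]`, with each `uᵢ ∈ I`, which are independent and whose (direct)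
sum is `I` as a `K`-vector space. -/
structure StanleyDecomp {n : ℕ} (K : Type*) [Field K]
    (I : Ideal (MvPolynomial (Fin n) K)) where
  m : ℕ
  u : Fin m → (Fin n →₀ ℕ)
  Z : Fin m → Finset (Fin n)
  mem : ∀ i, monomial (u i) (1 : K) ∈ I
  indep : iSupIndep fun i => stanleySpace K (u i) (Z i)
  total : (⨆ i, stanleySpace K (u i) (Z i)) = Submodule.restrictScalars K I

/-- The Stanley depth of a monomial ideal: the largest `k` such that `I` admits a
Stanley decomposition all of whose Stanley spaces use at least `k` variables. -/
noncomputable def sdepth {n : ℕ} {K : Type*} [Field K]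
    (I : Ideal (MvPolynomial (Fin n) K)) : ℕ :=
  sSup {k | ∃ D : StanleyDecomp K I, ∀ i, k ≤ (D.Z i).card}

/-- `I` is a monomial ideal if it is generated by monomials. -/
def IsMonomialIdeal {n : ℕ} {K : Type*} [Field K]
    (I : Ideal (MvPolynomial (Fin n) K)) : Prop :=
  ∃ G : Set (Fin n →₀ ℕ), I = Ideal.span ((fun d => monomial d (1 : K)) '' G)

/-- The monomial prime ideal generated by the variables in `A`. -/
noncomputable def varIdeal {n : ℕ} (K : Type*) [Field K] (A : Finset (Fin n)) :
    Ideal (MvPolynomial (Fin n) K) :=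
  Ideal.span ((fun i => (X i : MvPolynomial (Fin n) K)) '' ↑A)

/-- The graded maximal ideal `(x_1, …, x_n)`. -/
noncomputable def maxIdeal (n : ℕ) (K : Type*) [Field K] :
    Ideal (MvPolynomial (Fin n) K) :=
  varIdeal K Finset.univ

namespace DepthThree

open CategoryTheory Abelian

universe u

/-- Vanishing of the `i`-th Ext module. -/
def EZ (R : Type u) [CommRing R] (N M : Type u) [AddCommGroup N] [Module R N]
    [AddCommGroup M] [Module R M] (i : ℕ) : Prop :=
  Subsingleton (Ext (ModuleCat.of R N) (ModuleCat.of R M) i)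

section General

variable {R : Type u} [CommRing R] {N M M' M'' : Type u} [AddCommGroup N] [Module R N]
    [AddCommGroup M] [Module R M] [AddCommGroup M'] [Module R M'] [AddCommGroup M''] [Module R M'']

lemma ses (f : M →ₗ[R] M') (g : M' →ₗ[R] M'') (hf : Function.Injective f)
    (hg : Function.Surjective g) (h : Function.Exact f g) :
    (ModuleCat.shortComplexOfCompEqZero f g h.linearMap_comp_eq_zero).ShortExact :=
  ModuleCat.shortComplex_shortExact _ h hf hg

lemma ez_left (f : M →ₗ[R] M') (g : M' →ₗ[R] M'') (hf : Function.Injective f)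
    (hg : Function.Surjective g) (h : Function.Exact f g) {i : ℕ}
    (h1 : EZ R N M'' i) (h2 : EZ R N M' (i + 1)) : EZ R N M (i + 1) := by
  refine ⟨fun a b => ?_⟩
  have key : ∀ x : Ext (ModuleCat.of R N) (ModuleCat.of R M) (i + 1), x = 0 := by
    intro x
    obtain ⟨y, hy⟩ := Ext.covariant_sequence_exact₁ (ModuleCat.of R N) (ses f g hf hg h) x
      (h2.elim _ _) (n₀ := i) rfl
    rw [← hy, h1.elim y 0, Ext.zero_comp]
  rw [key a, key b]

lemma ez_right (f : M →ₗ[R] M') (g : M' →ₗ[R] M'') (hf : Function.Injective f)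
    (hg : Function.Surjective g) (h : Function.Exact f g) {i : ℕ}
    (h1 : EZ R N M' i) (h2 : EZ R N M (i + 1)) : EZ R N M'' i := by
  refine ⟨fun a b => ?_⟩
  have key : ∀ x : Ext (ModuleCat.of R N) (ModuleCat.of R M'') i, x = 0 := by
    intro x
    obtain ⟨y, hy⟩ := Ext.covariant_sequence_exact₃ (ModuleCat.of R N) (ses f g hf hg h) x
      (n₁ := i + 1) rfl (h2.elim _ _)
    rw [← hy, h1.elim y 0, Ext.zero_comp]
  rw [key a, key b]

lemma ez_mid (f : M →ₗ[R] M') (g : M' →ₗ[R] M'') (hf : Function.Injective f)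
    (hg : Function.Surjective g) (h : Function.Exact f g) {i : ℕ}
    (h1 : EZ R N M i) (h2 : EZ R N M'' i) : EZ R N M' i := by
  refine ⟨fun a b => ?_⟩
  have key : ∀ x : Ext (ModuleCat.of R N) (ModuleCat.of R M') i, x = 0 := by
    intro x
    obtain ⟨y, hy⟩ := Ext.covariant_sequence_exact₂ (ModuleCat.of R N) (ses f g hf hg h) x
      (h2.elim _ _)
    rw [← hy, h1.elim y 0, Ext.zero_comp]
  rw [key a, key b]

lemma ez_zero {r : R} (hr : IsSMulRegular M r) (ha : r ∈ Module.annihilator R N) :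
    EZ R N M 0 := by
  have : Subsingleton (N →ₗ[R] M) := hr.linearMap_subsingleton_of_mem_annihilator ha
  exact (Ext.addEquiv₀.trans ModuleCat.homAddEquiv).subsingleton

lemma ez_succ {r : R} (hr : IsSMulRegular M r) (ha : r ∈ Module.annihilator R N)
    (g : M →ₗ[R] M'') (hg : Function.Surjective g)
    (h : Function.Exact (LinearMap.lsmul R M r) g) {i : ℕ}
    (h1 : EZ R N M'' i) : EZ R N M (i + 1) := by
  refine ⟨fun a b => ?_⟩
  have key : ∀ x : Ext (ModuleCat.of R N) (ModuleCat.of R M) (i + 1), x = 0 := by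
    intro x
    have h0 := Ext.postcomp_smul_id_eq_zero_of_mem_annihilator (M := ModuleCat.of R M)
      (N := ModuleCat.of R N) ha (i + 1)
    obtain ⟨y, hy⟩ := Ext.covariant_sequence_exact₁ (ModuleCat.of R N)
      (ses (LinearMap.lsmul R M r) g hr hg h) x
      (congrArg (fun t => t.hom x) h0) (n₀ := i) rfl
    rw [← hy, h1.elim y 0, Ext.zero_comp]
  rw [key a, key b]

lemma ez_prod {i : ℕ} (h1 : EZ R N M i) (h2 : EZ R N M' i) : EZ R N (M × M') i :=
  ez_mid (LinearMap.inl R M M') (LinearMap.snd R M M') LinearMap.inl_injective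
    LinearMap.snd_surjective (Function.Exact.inl_snd) h1 h2

lemma not_ez_self [Nontrivial N] : ¬ EZ R N N 0 := by
  intro h
  have h2 : Subsingleton (N →ₗ[R] N) :=
    haveI : Subsingleton (Ext (ModuleCat.of R N) (ModuleCat.of R N) 0) := h
    ((Ext.addEquiv₀ (X := ModuleCat.of R N) (Y := ModuleCat.of R N)).trans
      ModuleCat.homAddEquiv).symm.toEquiv.subsingleton
  obtain ⟨x, hx⟩ := exists_ne (0 : N)
  exact hx (by simpa using LinearMap.congr_fun (h2.elim LinearMap.id 0) x)

/-- Mayer-Vietoris maps -/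
def mvf (J L : Ideal R) : ↥(J ⊓ L) →ₗ[R] J × L :=
  (Submodule.inclusion inf_le_left).prod (Submodule.inclusion inf_le_right)

def mvg (J L : Ideal R) : J × L →ₗ[R] ↥(J ⊔ L) :=
  LinearMap.coprod (Submodule.inclusion le_sup_left) (-Submodule.inclusion le_sup_right)

lemma mvf_inj (J L : Ideal R) : Function.Injective (mvf J L) := by
  intro a b h
  have := congrArg (fun t => (t.1 : R)) h
  exact Subtype.ext this

lemma mvg_surj (J L : Ideal R) : Function.Surjective (mvg J L) := by
  rintro ⟨x, hx⟩
  obtain ⟨a, ha, b, hb, rfl⟩ := Submodule.mem_sup.1 hx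
  refine ⟨(⟨a, ha⟩, ⟨-b, neg_mem hb⟩), ?_⟩
  apply Subtype.ext
  simp [mvg]

lemma mv_exact (J L : Ideal R) : Function.Exact (mvf J L) (mvg J L) := by
  rintro ⟨⟨a, ha⟩, ⟨b, hb⟩⟩
  constructor
  · intro h
    have h' : a + -b = 0 := congrArg Subtype.val h
    have : a = b := by linear_combination h'
    subst this
    exact ⟨⟨a, ha, hb⟩, rfl⟩
  · rintro ⟨⟨c, hc⟩, h⟩
    have h1 : c = a := congrArg (fun t => (t.1 : R)) h
    have h2 : c = b := congrArg (fun t => (t.2 : R)) h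
    apply Subtype.ext
    change a + -b = 0
    rw [← h1, ← h2]; ring

lemma ez_inf {J L : Ideal R} {i : ℕ} (h : EZ R N ↥(J ⊔ L) i) (hJ : EZ R N J (i + 1))
    (hL : EZ R N L (i + 1)) : EZ R N ↥(J ⊓ L) (i + 1) :=
  ez_left _ _ (mvf_inj J L) (mvg_surj J L) (mv_exact J L) h (ez_prod hJ hL)

lemma ez_sup {J L : Ideal R} {i : ℕ} (h : EZ R N ↥(J ⊓ L) (i + 1)) (hJ : EZ R N J i)
    (hL : EZ R N L i) : EZ R N ↥(J ⊔ L) i :=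
  ez_right _ _ (mvf_inj J L) (mvg_surj J L) (mv_exact J L) (ez_prod hJ hL) h

lemma quot_exact (J : Ideal R) : Function.Exact J.subtype (Submodule.mkQ J) :=
  LinearMap.exact_subtype_mkQ J

end General

section Poly

variable {K : Type u} [Field K] {n : ℕ}

lemma mem_varIdeal {A : Finset (Fin n)} {f : MvPolynomial (Fin n) K} :
    f ∈ varIdeal K A ↔ ∀ m ∈ f.support, ∃ i ∈ A, m i ≠ 0 := by
  have := @mem_ideal_span_X_image (Fin n) K _ f (A : Set (Fin n))
  simpa [varIdeal] using this

lemma varIdeal_sup (A B : Finset (Fin n)) :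
    varIdeal K A ⊔ varIdeal K B = varIdeal K (A ∪ B) := by
  simp [varIdeal, Set.image_union, Ideal.span_union]

lemma varIdeal_mono {A B : Finset (Fin n)} (h : A ⊆ B) : varIdeal K A ≤ varIdeal K B :=
  Ideal.span_mono (Set.image_mono (by exact_mod_cast h))

lemma exists_of_not_le {A B : Finset (Fin n)} (h : ¬ varIdeal K A ≤ varIdeal K B) :
    ∃ a ∈ A, a ∉ B := by
  by_contra! hc
  exact h (varIdeal_mono hc)

lemma X_mem {A : Finset (Fin n)} {b : Fin n} (h : b ∈ A) :
    (X b : MvPolynomial (Fin n) K) ∈ varIdeal K A :=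
  Ideal.subset_span ⟨b, h, rfl⟩

lemma mem_of_X_mul {A : Finset (Fin n)} {b : Fin n} (h : b ∉ A) {f : MvPolynomial (Fin n) K}
    (hf : X b * f ∈ varIdeal K A) : f ∈ varIdeal K A := by
  rw [mem_varIdeal] at hf ⊢
  intro m hm
  obtain ⟨i, hi, hne⟩ := hf (Finsupp.single b 1 + m) (by
    rw [mem_support_iff, coeff_X_mul]
    exact mem_support_iff.1 hm)
  refine ⟨i, hi, ?_⟩
  have : b ≠ i := by rintro rfl; exact h hi
  simpa [Finsupp.single_apply, this] using hne

lemma one_notMem (A : Finset (Fin n)) : (1 : MvPolynomial (Fin n) K) ∉ varIdeal K A := by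
  rw [mem_varIdeal]
  intro h
  obtain ⟨i, _, hi⟩ := h 0 (by simp [mem_support_iff])
  simp at hi

lemma inf_sup_distrib (A B C : Finset (Fin n)) :
    (varIdeal K A ⊓ varIdeal K B) ⊔ varIdeal K C =
      (varIdeal K A ⊔ varIdeal K C) ⊓ (varIdeal K B ⊔ varIdeal K C) := by
  apply le_antisymm
  · exact sup_le (le_inf (inf_le_left.trans le_sup_left) (inf_le_right.trans le_sup_left))
      (le_inf le_sup_right le_sup_right)
  · intro f hf
    rw [varIdeal_sup, varIdeal_sup] at hf
    have h1 := mem_varIdeal.1 hf.1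
    have h2 := mem_varIdeal.1 hf.2
    rw [f.as_sum]
    refine Ideal.sum_mem _ fun m hm => ?_
    have hmon : ∀ D : Finset (Fin n), (∃ i ∈ D, m i ≠ 0) →
        monomial m (coeff m f) ∈ varIdeal K D := by
      intro D hD
      rw [mem_varIdeal]
      intro m' hm'
      have := support_monomial_subset hm'
      rw [Finset.mem_singleton] at this
      rwa [this]
    obtain ⟨i, hi, hi0⟩ := h1 m hm
    obtain ⟨j, hj, hj0⟩ := h2 m hm
    rw [Finset.mem_union] at hi hj
    rcases hi with hi | hi
    · rcases hj with hj | hj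
      · exact Ideal.mem_sup_left ⟨hmon A ⟨i, hi, hi0⟩, hmon B ⟨j, hj, hj0⟩⟩
      · exact Ideal.mem_sup_right (hmon C ⟨j, hj, hj0⟩)
    · exact Ideal.mem_sup_right (hmon C ⟨i, hi, hi0⟩)

/-- residue field -/
abbrev RF (n : ℕ) (K : Type u) [Field K] : Type u := MvPolynomial (Fin n) K ⧸ maxIdeal n K

lemma X_ann (b : Fin n) :
    (X b : MvPolynomial (Fin n) K) ∈ Module.annihilator (MvPolynomial (Fin n) K) (RF n K) := by
  rw [Ideal.annihilator_quotient]
  exact X_mem (Finset.mem_univ b)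

instance : Nontrivial (RF n K) :=
  Ideal.Quotient.nontrivial_iff.2 fun h => one_notMem (K := K) (n := n) Finset.univ
    (by have : (1 : MvPolynomial (Fin n) K) ∈ maxIdeal n K := by rw [h]; trivial
        exact this)

lemma reg_quot {A : Finset (Fin n)} {b : Fin n} (h : b ∉ A) :
    IsSMulRegular (MvPolynomial (Fin n) K ⧸ varIdeal K A) (X b : MvPolynomial (Fin n) K) :=
  (isSMulRegular_quotient_iff_mem_of_smul_mem _ _).2 fun _ hx => mem_of_X_mul h hx

lemma reg_ideal (J : Ideal (MvPolynomial (Fin n) K)) (b : Fin n) :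
    IsSMulRegular J (X b : MvPolynomial (Fin n) K) :=
  (isSMulRegular_submodule_iff_right_eq_zero_of_smul _ _).2 fun x _ hx => by
    simpa [X_ne_zero] using hx

lemma reg_self (b : Fin n) :
    IsSMulRegular (MvPolynomial (Fin n) K) (X b : MvPolynomial (Fin n) K) :=
  isSMulRegular_iff_right_eq_zero_of_smul.2 fun x hx => by
    simpa [X_ne_zero] using hx

lemma mem_insert_iff {A : Finset (Fin n)} {b : Fin n} {f : MvPolynomial (Fin n) K} :
    f ∈ varIdeal K (insert b A) ↔ ∃ g, f - X b * g ∈ varIdeal K A := by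
  have : varIdeal K (insert b A) = Ideal.span {X b} ⊔ varIdeal K A := by
    simp [varIdeal, Set.image_insert_eq, Ideal.span_insert]
  rw [this, Submodule.mem_sup]
  constructor
  · rintro ⟨y, hy, z, hz, rfl⟩
    obtain ⟨g, rfl⟩ := Ideal.mem_span_singleton'.1 hy
    exact ⟨g, by convert hz using 1; ring⟩
  · rintro ⟨g, hg⟩
    exact ⟨X b * g, Ideal.mul_mem_right _ _ (Ideal.mem_span_singleton_self _), _, hg, by ring⟩

lemma ez_quot (i : ℕ) : ∀ A : Finset (Fin n), i < Aᶜ.card →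
    EZ (MvPolynomial (Fin n) K) (RF n K) (MvPolynomial (Fin n) K ⧸ varIdeal K A) i := by
  induction i with
  | zero =>
    intro A hA
    obtain ⟨b, hb⟩ := Finset.card_pos.1 hA
    exact ez_zero (reg_quot (Finset.mem_compl.1 hb)) (X_ann b)
  | succ i ih =>
    intro A hA
    obtain ⟨b, hb⟩ := Finset.card_pos.1 (by omega : 0 < Aᶜ.card)
    rw [Finset.mem_compl] at hb
    have hc : i < (insert b A)ᶜ.card := by
      rw [Finset.card_compl, Finset.card_insert_of_notMem hb]
      rw [Finset.card_compl] at hA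
      omega
    have hle : varIdeal K A ≤ varIdeal K (insert b A) := varIdeal_mono (Finset.subset_insert _ _)
    refine ez_succ (reg_quot hb) (X_ann b) (Submodule.factor hle)
      (Submodule.factor_surjective hle) ?_ (ih _ hc)
    intro y
    obtain ⟨f, rfl⟩ := Submodule.mkQ_surjective _ y
    constructor
    · intro h
      have h' : f ∈ varIdeal K (insert b A) := by
        exact (Submodule.Quotient.mk_eq_zero _).1 h
      obtain ⟨g, hg⟩ := mem_insert_iff.1 h'
      refine ⟨Submodule.mkQ _ g, ?_⟩
      have : Submodule.mkQ (varIdeal K A) ((X b : MvPolynomial (Fin n) K) • g) = Submodule.mkQ (varIdeal K A) f := by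
        symm
        rw [← sub_eq_zero, ← map_sub]
        exact (Submodule.Quotient.mk_eq_zero _).2 hg
      exact this
    · rintro ⟨z, hz⟩
      obtain ⟨g, rfl⟩ := Submodule.mkQ_surjective _ z
      rw [← hz]
      have : X b * g ∈ varIdeal K (insert b A) :=
        Ideal.mul_mem_right _ _ (X_mem (Finset.mem_insert_self b A))
      have h2 : Submodule.mkQ (varIdeal K (insert b A)) ((X b : MvPolynomial (Fin n) K) • g) = 0 :=
        (Submodule.Quotient.mk_eq_zero _).2 this
      exact h2

lemma ez_ring (i : ℕ) (hi : i < n) :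
    EZ (MvPolynomial (Fin n) K) (RF n K) (MvPolynomial (Fin n) K) i := by
  have b : Fin n := ⟨i, hi⟩
  cases i with
  | zero => exact ez_zero (reg_self b) (X_ann b)
  | succ i =>
    refine ez_succ (reg_self b) (X_ann b) (Submodule.mkQ (varIdeal K {b}))
      (Submodule.mkQ_surjective _) ?_ (ez_quot i {b} ?_)
    · intro y
      simp only [Submodule.mkQ_apply, Submodule.Quotient.mk_eq_zero]
      simp only [varIdeal, Finset.coe_singleton, Set.image_singleton, Ideal.mem_span_singleton']
      simp [mul_comm]
    · rw [Finset.card_compl]; simp; omega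

lemma ez_ideal_zero (hn : 0 < n) (J : Ideal (MvPolynomial (Fin n) K)) :
    EZ (MvPolynomial (Fin n) K) (RF n K) J 0 :=
  ez_zero (reg_ideal J ⟨0, hn⟩) (X_ann _)

lemma ez_var (hn : 3 ≤ n) {A : Finset (Fin n)} (i : ℕ) (h3 : i < 3) (hi : i ≤ Aᶜ.card) :
    EZ (MvPolynomial (Fin n) K) (RF n K) (varIdeal K A) i := by
  cases i with
  | zero => exact ez_ideal_zero (by omega) _
  | succ i =>
    exact ez_left _ _ (Submodule.injective_subtype _) (Submodule.mkQ_surjective _)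
      (quot_exact _) (ez_quot i A (by omega)) (ez_ring _ (by omega))

lemma not_ez_max (hn : 0 < n) :
    ¬ EZ (MvPolynomial (Fin n) K) (RF n K) (maxIdeal n K) 1 := fun h =>
  not_ez_self (R := MvPolynomial (Fin n) K) (N := RF n K)
    (ez_right _ _ (Submodule.injective_subtype _) (Submodule.mkQ_surjective _)
      (quot_exact _) (ez_ring 0 hn) h)

lemma smul_lt (J : Ideal (MvPolynomial (Fin n) K)) (hJ : J ≠ ⊥) :
    maxIdeal n K • (⊤ : Submodule (MvPolynomial (Fin n) K) J) < ⊤ := by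
  rw [lt_top_iff_ne_top]
  intro h
  obtain ⟨r, hr, hr0⟩ := Submodule.exists_sub_one_mem_and_smul_eq_zero_of_fg_of_le_smul
    (maxIdeal n K) (⊤ : Submodule (MvPolynomial (Fin n) K) J) (IsNoetherian.noetherian _) h.ge
  obtain ⟨x, hx, hx0⟩ := Submodule.exists_mem_ne_zero_of_ne_bot hJ
  have h1 : r * x = 0 := congrArg Subtype.val (hr0 ⟨x, hx⟩ trivial)
  have h2 : r = 0 := by simpa [hx0] using h1
  rw [h2, zero_sub] at hr
  exact one_notMem (K := K) (n := n) Finset.univ (by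
    have h3 := neg_mem hr
    rw [neg_neg] at h3
    exact h3)

lemma moduleDepth_eq (J : Ideal (MvPolynomial (Fin n) K)) (hJ : J ≠ ⊥) (d : ℕ)
    (h : ∀ i < d, EZ (MvPolynomial (Fin n) K) (RF n K) J i)
    (h' : ¬ EZ (MvPolynomial (Fin n) K) (RF n K) J d) :
    moduleDepth (MvPolynomial (Fin n) K) (maxIdeal n K) J = d := by
  have hs : Module.support (MvPolynomial (Fin n) K) (ModuleCat.of (MvPolynomial (Fin n) K) (RF n K))
      = PrimeSpectrum.zeroLocus (maxIdeal n K) := by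
    rw [Module.support_eq_zeroLocus]
    change PrimeSpectrum.zeroLocus
      (SetLike.coe <| Module.annihilator (MvPolynomial (Fin n) K) (MvPolynomial (Fin n) K ⧸ maxIdeal n K)) = _
    rw [Ideal.annihilator_quotient]
  have : Module.Finite (MvPolynomial (Fin n) K)
    (ModuleCat.of (MvPolynomial (Fin n) K) J) := inferInstanceAs (Module.Finite _ J)
  have : Module.Finite (MvPolynomial (Fin n) K)
    (ModuleCat.of (MvPolynomial (Fin n) K) (RF n K)) := inferInstanceAs (Module.Finite _ (RF n K))
  apply IsGreatest.csSup_eq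
  constructor
  · exact ModuleCat.exists_isRegular_of_exists_subsingleton_ext (maxIdeal n K) d
      (ModuleCat.of _ J) (smul_lt J hJ) (ModuleCat.of _ (RF n K)) hs h
  · rintro k ⟨rs, rfl, hm, hreg⟩
    by_contra hk
    exact h' (ModuleCat.subsingleton_ext_of_exists_isRegular (maxIdeal n K)
      (ModuleCat.of _ (RF n K)) hs.subset (ModuleCat.of _ J) (smul_lt J hJ) rs hm hreg d
      (by omega))

end Poly

end DepthThree

open DepthThree in
/-- for three pairwise incomparable nonzero monomial primes with
`P₁+P₂+P₃ = (x₁,…,xₙ)` and no `P_i` contained in the sum of the other two,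
`depth (P₁ ∩ P₂ ∩ P₃) = 3`. -/
theorem depth_inter_three_primes_generic {K : Type*} [Field K] (n : ℕ)
    (A1 A2 A3 : Finset (Fin n)) :
    letI P1 : Ideal (MvPolynomial (Fin n) K) := varIdeal K A1
    letI P2 : Ideal (MvPolynomial (Fin n) K) := varIdeal K A2
    letI P3 : Ideal (MvPolynomial (Fin n) K) := varIdeal K A3
    P1 ≠ ⊥ → P2 ≠ ⊥ → P3 ≠ ⊥ →
    ¬P1 ≤ P2 → ¬P2 ≤ P1 → ¬P1 ≤ P3 → ¬P3 ≤ P1 → ¬P2 ≤ P3 → ¬P3 ≤ P2 →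
    P1 ⊔ P2 ⊔ P3 = maxIdeal n K →
    ¬P1 ≤ P2 ⊔ P3 → ¬P2 ≤ P1 ⊔ P3 → ¬P3 ≤ P1 ⊔ P2 →
    moduleDepth (MvPolynomial (Fin n) K) (maxIdeal n K) ↥(P1 ⊓ P2 ⊓ P3) = 3 := by
  intro _ _ _ _ _ _ _ _ _ hsum h1 h2 h3
  change ¬ varIdeal K A1 ≤ varIdeal K A2 ⊔ varIdeal K A3 at h1
  change ¬ varIdeal K A2 ≤ varIdeal K A1 ⊔ varIdeal K A3 at h2
  change ¬ varIdeal K A3 ≤ varIdeal K A1 ⊔ varIdeal K A2 at h3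
  change varIdeal K A1 ⊔ varIdeal K A2 ⊔ varIdeal K A3 = maxIdeal n K at hsum
  change moduleDepth (MvPolynomial (Fin n) K) (maxIdeal n K)
    ↥(varIdeal K A1 ⊓ varIdeal K A2 ⊓ varIdeal K A3) = 3
  rw [varIdeal_sup] at h1 h2 h3
  obtain ⟨a, ha, ha'⟩ := exists_of_not_le h1
  obtain ⟨b, hb, hb'⟩ := exists_of_not_le h2
  obtain ⟨c, hc, hc'⟩ := exists_of_not_le h3
  rw [Finset.mem_union, not_or] at ha' hb' hc'
  have hab : a ≠ b := by rintro rfl; exact ha'.1 hb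
  have hac : a ≠ c := by rintro rfl; exact ha'.2 hc
  have hbc : b ≠ c := by rintro rfl; exact hb'.2 hc
  have hn : 3 ≤ n := by
    have h := Finset.card_le_univ ({a, b, c} : Finset (Fin n))
    rw [Finset.card_eq_three.2 ⟨a, b, c, hab, hac, hbc, rfl⟩] at h
    simpa using h
  have two : ∀ (A : Finset (Fin n)) (x y : Fin n), x ≠ y → x ∉ A → y ∉ A → 2 ≤ Aᶜ.card := by
    intro A x y hxy hx hy
    rw [← Finset.card_pair hxy]
    apply Finset.card_le_card
    intro z hz
    rw [Finset.mem_insert, Finset.mem_singleton] at hz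
    rcases hz with rfl | rfl <;> simpa
  have one : ∀ (A : Finset (Fin n)) (x : Fin n), x ∉ A → 1 ≤ Aᶜ.card := fun A x hx =>
    Finset.card_pos.2 ⟨x, by simpa⟩
  have c1 := two A1 b c hbc hb'.1 hc'.1
  have c2 := two A2 a c hac ha'.1 hc'.2
  have c3 := two A3 a b hab ha'.2 hb'.2
  have c12 := one (A1 ∪ A2) c (by simp [hc'])
  have c13 := one (A1 ∪ A3) b (by simp [hb'])
  have c23 := one (A2 ∪ A3) a (by simp [ha'])
  have z : ∀ J : Ideal (MvPolynomial (Fin n) K), EZ (MvPolynomial (Fin n) K) (RF n K) J 0 := ez_ideal_zero (K := K) (by omega)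
  have e12 : ∀ i < 2, EZ (MvPolynomial (Fin n) K) (RF n K)
      ↥(varIdeal K A1 ⊓ varIdeal K A2) (i + 1) := by
    intro i hi
    refine ez_inf ?_ (ez_var hn _ (by omega) (by omega)) (ez_var hn _ (by omega) (by omega))
    rw [varIdeal_sup]
    exact ez_var hn _ (by omega) (by omega)
  have hmax : (varIdeal K A1 ⊔ varIdeal K A3) ⊔ (varIdeal K A2 ⊔ varIdeal K A3)
      = maxIdeal n K := by
    rw [← hsum, sup_sup_sup_comm, sup_idem]
  have eQ1 : EZ (MvPolynomial (Fin n) K) (RF n K) ↥(varIdeal K A1 ⊔ varIdeal K A3) 1 := by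
    rw [varIdeal_sup]; exact ez_var hn _ (by omega) (by omega)
  have eQ2 : EZ (MvPolynomial (Fin n) K) (RF n K) ↥(varIdeal K A2 ⊔ varIdeal K A3) 1 := by
    rw [varIdeal_sup]; exact ez_var hn _ (by omega) (by omega)
  have eQ : ∀ i < 2, EZ (MvPolynomial (Fin n) K) (RF n K)
      ↥((varIdeal K A1 ⊔ varIdeal K A3) ⊓ (varIdeal K A2 ⊔ varIdeal K A3)) i := by
    intro i hi
    interval_cases i
    · exact z _
    · exact ez_inf (z _) eQ1 eQ2
  have nQ : ¬ EZ (MvPolynomial (Fin n) K) (RF n K)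
      ↥((varIdeal K A1 ⊔ varIdeal K A3) ⊓ (varIdeal K A2 ⊔ varIdeal K A3)) 2 := by
    intro h
    have := ez_sup h eQ1 eQ2
    rw [hmax] at this
    exact not_ez_max (by omega) this
  have e3 : EZ (MvPolynomial (Fin n) K) (RF n K) (varIdeal K A3) 2 :=
    ez_var hn _ (by omega) (by omega)
  apply moduleDepth_eq
  · intro hbot
    have hm : (X a * X b * X c : MvPolynomial (Fin n) K) ∈
        varIdeal K A1 ⊓ varIdeal K A2 ⊓ varIdeal K A3 :=
      ⟨⟨Ideal.mul_mem_right _ _ (Ideal.mul_mem_right _ _ (X_mem ha)),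
        Ideal.mul_mem_right _ _ (Ideal.mul_mem_left _ _ (X_mem hb))⟩,
        Ideal.mul_mem_left _ _ (X_mem hc)⟩
    rw [hbot, Ideal.mem_bot] at hm
    simp [X_ne_zero] at hm
  · intro i hi
    cases i with
    | zero => exact z _
    | succ i =>
      refine ez_inf ?_ (e12 i (by omega)) (ez_var hn _ (by omega) (by omega))
      rw [inf_sup_distrib]
      exact eQ i (by omega)
  · intro h
    have := ez_sup h (e12 1 (by omega)) e3
    rw [inf_sup_distrib] at this
    exact nQ this
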